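/- In Λ, for all natural numbers n ≥ 2 and m ≥ 0, the identity (n+m−1)·v(n)v(m) = n·m·v(1)v(n+m−1) − (n−1)(m−1)·v(0)v(n+m) + n(n−1)·v(n+m−1) holds. (These are the relations of the Gröbner–Shirshov basis of A₊(U(3)).) -/

import Mathlib

/-- The generator `v(n)` in the free associative ℚ-algebra on countably many
generators. -/
noncomputable def vf (n : ℕ) : FreeAlgebra ℚ ℕ := FreeAlgebra.ι ℚ n

/-- The defining relations of `Λ` (the unitalization of `A₊(U(3))`):
* locality: for `n ≥ 3` (written `n = k + 3`) and `m ≥ 0`,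
  `v(n)v(m) - 3v(n-1)v(m+1) + 3v(n-2)v(m+2) - v(n-3)v(m+3) = 0`;
* commutator: for `n > m ≥ 0` (written `n = m + k + 1`),
  `v(n)v(m) - v(m)v(n) = (n - m)·v(n+m-1)`. -/
inductive LambdaRel : FreeAlgebra ℚ ℕ → FreeAlgebra ℚ ℕ → Prop
  | locality (k m : ℕ) :
      LambdaRel (vf (k + 3) * vf m + 3 * (vf (k + 1) * vf (m + 2)))
        (3 * (vf (k + 2) * vf (m + 1)) + vf k * vf (m + 3))
  | commutator (m k : ℕ) :
      LambdaRel (vf (m + k + 1) * vf m)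
        (vf m * vf (m + k + 1) + ((k : ℚ) + 1) • vf (2 * m + k))

/-- The unital associative ℚ-algebra `Λ` presented by the generators `v(n)`,
`n ∈ ℕ`, and the relations `LambdaRel`. -/
abbrev Lambda : Type := RingQuot LambdaRel

/-- The generator `v(n)` of `Λ`. -/
noncomputable def v (n : ℕ) : Lambda := RingQuot.mkAlgHom ℚ LambdaRel (vf n)

/-!
By locality the third differences of `i ↦ v i * v (n + m - i)` vanish on `0, …, n + m`, so this
product is a quadratic polynomial in `i` and Lagrange interpolation at the nodes `0`, `1`, `n + m`
expresses `v n * v m` through the three products at the nodes. Commuting `v (n + m)` past `v 0`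
brings the third product back to the first, up to `(n + m) • v (n + m - 1)`, and the remaining
common factor `n + m` cancels.
-/

open Finset
open scoped fwdDiff

section Interpolation

variable {G : Type*} [AddCommGroup G]

theorem eq_sum_choose_smul_fwdDiff_iter {f : ℕ → G} {d N n : ℕ}
    (hf : ∀ k, k + d ≤ N → Δ_[1] ^[d] f k = 0) (hn : n ≤ N) :
    f n = ∑ k ∈ range d, n.choose k • Δ_[1] ^[k] f 0 := by
  have higher_diff_eq_zero {k : ℕ} (hdk : d ≤ k) (hkn : k ≤ n) : Δ_[1] ^[k] f 0 = 0 := by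
    obtain ⟨j, rfl⟩ := Nat.exists_eq_add_of_le' hdk
    rw [Function.iterate_add_apply, fwdDiff_iter_eq_sum_shift]
    refine sum_eq_zero fun i hi ↦ ?_
    rw [mem_range] at hi
    rw [hf _ (by rw [smul_eq_mul]; lia), smul_zero]
  calc
    f n = ∑ k ∈ range (n + 1), n.choose k • Δ_[1] ^[k] f 0 := by
      simpa using shift_eq_sum_fwdDiff_iter 1 f n 0
    _ = ∑ k ∈ range d, n.choose k • Δ_[1] ^[k] f 0 := by
      refine sum_congr_of_eq_on_inter (fun k hkn hkd ↦ ?_) (fun k _ hkn ↦ ?_) fun _ _ _ ↦ rfl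
      · rw [mem_range] at hkn hkd
        rw [higher_diff_eq_zero (by lia) (by lia), smul_zero]
      · rw [mem_range] at hkn
        rw [Nat.choose_eq_zero_of_lt (by lia), zero_smul]

theorem two_mul_cast_choose_two {R : Type*} [Ring R] (n : ℕ) :
    2 * (n.choose 2 : R) = n * (n - 1) := by
  rw [← Nat.cast_descFactorial_two, Nat.descFactorial_eq_factorial_mul_choose]
  simp

-- Lagrange interpolation at the nodes `0`, `1`, `n + m`, with denominators cleared.
theorem smul_eq_of_fwdDiff_iter_three_eq_zero {f : ℕ → G} {n m : ℕ}
    (hf : ∀ k, k + 3 ≤ n + m → Δ_[1] ^[3] f k = 0) :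
    ((n + m) * (n + m - 1) : ℤ) • f n =
      ((n + m) * n * m : ℤ) • f 1 - ((n + m - 1) * (n - 1) * m : ℤ) • f 0
        + (n * (n - 1) : ℤ) • f (n + m) := by
  have newton {i : ℕ} (hi : i ≤ n + m) :
      f i = f 0 + (i : ℤ) • (f 1 - f 0) + (i.choose 2 : ℤ) • Δ_[1] ^[2] f 0 := by
    rw [eq_sum_choose_smul_fwdDiff_iter hf hi]
    simp [sum_range_succ, fwdDiff]
  have choose_two_comm : ((n + m) * (n + m - 1) * n.choose 2 : ℤ) =
      n * (n - 1) * (n + m).choose 2 := by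
    have hn := two_mul_cast_choose_two (R := ℤ) n
    have hnm := two_mul_cast_choose_two (R := ℤ) (n + m)
    push_cast at hnm
    linear_combination (n.choose 2 : ℤ) * -hnm + ((n + m).choose 2 : ℤ) * hn
  rw [newton (i := n) (by lia), newton (i := n + m) le_rfl]
  push_cast
  linear_combination (norm := module) choose_two_comm • Δ_[1] ^[2] f 0

end Interpolation

section Locality

variable {A : Type*} [NonUnitalNonAssocRing A]

/-- A sequence is local of order `d` if `∑ₛ (-1)ˢ (d choose s) w(n - s) w(m + s) = 0` for all
`n ≥ d` and `m`; the generators of `A₊(U(d))` form such a sequence. The encoding puts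
`k = n - d` and `i = d - s`, so that the sum has the shape of an iterated forward difference. -/
def IsLocal (d : ℕ) (w : ℕ → A) : Prop :=
  ∀ k m, ∑ i ∈ range (d + 1), ((-1 : ℤ) ^ (d - i) * d.choose i) • (w (k + i) * w (m + (d - i))) = 0

theorem IsLocal.fwdDiff_iter_mul_eq_zero {d N k : ℕ} {w : ℕ → A} (hw : IsLocal d w)
    (hk : k + d ≤ N) : Δ_[1] ^[d] (fun i ↦ w i * w (N - i)) k = 0 := by
  rw [fwdDiff_iter_eq_sum_shift, ← hw k (N - (k + d))]
  refine sum_congr rfl fun i hi ↦ ?_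
  rw [mem_range] at hi
  rw [smul_eq_mul, mul_one, show N - (k + i) = N - (k + d) + (d - i) by lia]

theorem gsb_relations_general [IsAddTorsionFree A] {w : ℕ → A} (hloc : IsLocal 3 w)
    (hcomm : ∀ n, w (n + 1) * w 0 - w 0 * w (n + 1) = (n + 1) • w n) (n m : ℕ) :
    (n + m - 1 : ℤ) • (w n * w m) =
      (n * m : ℤ) • (w 1 * w (n + m - 1)) - ((n - 1) * (m - 1) : ℤ) • (w 0 * w (n + m))
        + (n * (n - 1) : ℤ) • w (n + m - 1) := by
  obtain hzero | hne := eq_or_ne (n + m) 0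
  · obtain ⟨rfl, rfl⟩ := Nat.add_eq_zero_iff.mp hzero
    simp
  obtain ⟨s, hs⟩ := Nat.exists_eq_add_one_of_ne_zero hne
  have interpolation := smul_eq_of_fwdDiff_iter_three_eq_zero fun k hk ↦
    hloc.fwdDiff_iter_mul_eq_zero (N := n + m) (k := k) hk
  have commutation : w (s + 1) * w 0 = w 0 * w (s + 1) + (n + m : ℤ) • w s := by
    rw [← sub_eq_iff_eq_add', hcomm, ← hs, ← Nat.cast_add, natCast_zsmul]
  simp only [hs, Nat.add_sub_cancel, Nat.sub_zero, Nat.sub_self] at interpolation ⊢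
  rw [show s + 1 - n = m by lia, commutation] at interpolation
  have hnm : (n + m : ℤ) ≠ 0 := by lia
  apply zsmul_right_injective hnm
  linear_combination (norm := module) interpolation

end Locality

theorem isLocal_v : IsLocal 3 v := by
  intro k m
  have relation : v (k + 3) * v m + 3 * (v (k + 1) * v (m + 2)) =
      3 * (v (k + 2) * v (m + 1)) + v k * v (m + 3) := by
    simpa only [v, map_add, map_mul, map_ofNat] using
      RingQuot.mkAlgHom_rel ℚ (LambdaRel.locality k m)
  calc
    _ = v (k + 3) * v m - 3 * (v (k + 2) * v (m + 1)) + 3 * (v (k + 1) * v (m + 2))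
          - v k * v (m + 3) := by
      simp only [sum_range_succ, sum_range_zero]
      norm_num [Nat.choose]
      abel
    _ = 0 := by linear_combination (norm := abel) relation

theorem v_commutator_zero (n : ℕ) : v (n + 1) * v 0 - v 0 * v (n + 1) = (n + 1) • v n := by
  have relation : v (n + 1) * v 0 = v 0 * v (n + 1) + ((n : ℚ) + 1) • v n := by
    simpa only [v, map_add, map_mul, map_smul, Nat.zero_add, Nat.mul_zero] using
      RingQuot.mkAlgHom_rel ℚ (LambdaRel.commutator 0 n)
  rw [relation, add_sub_cancel_left, ← Nat.cast_succ, Nat.cast_smul_eq_nsmul]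

/-- in `Λ`, for all `n ≥ 2` and `m ≥ 0`,
`(n+m-1)·v(n)v(m) = nm·v(1)v(n+m-1) - (n-1)(m-1)·v(0)v(n+m) + n(n-1)·v(n+m-1)`
(the relations of the Gröbner–Shirshov basis of `A₊(U(3))`). -/
theorem gsb_relations (n m : ℕ) (hn : 2 ≤ n) :
    ((n : ℚ) + (m : ℚ) - 1) • (v n * v m) =
      ((n : ℚ) * (m : ℚ)) • (v 1 * v (n + m - 1))
        - (((n : ℚ) - 1) * ((m : ℚ) - 1)) • (v 0 * v (n + m))
        + ((n : ℚ) * ((n : ℚ) - 1)) • v (n + m - 1) := by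
  have : IsAddTorsionFree Lambda := .of_module_rat _
  simpa [← Int.cast_smul_eq_zsmul ℚ] using gsb_relations_general isLocal_v v_commutator_zero n m
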